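/- Let Ω be a nonempty open subset of ℝ², ρ a C¹ moment weight function on Ω satisfying the Pearson equation div(ρΦ) = ρ(ψ₁,ψ₂) on Ω. Then the matrix-weighted Sobolev space W^{1,2}(Ω,ρ,ρΦ) is complete: if {u_n} is a sequence in L²(Ω,ρ) and {h_n} a sequence in L²(Ω,ρΦ) such that each h_n is a weak gradient of u_n, {u_n} is Cauchy in L²(Ω,ρ), and {h_n} is Cauchy in L²(Ω,ρΦ), then there exist u ∈ L²(Ω,ρ) and w ∈ L²(Ω,ρΦ) such that u_n → u in L²(Ω,ρ), h_n → w in L²(Ω,ρΦ), and w is a weak gradient of u. -/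

import Mathlib

open MeasureTheory Filter

noncomputable section

abbrev Poly2 := MvPolynomial (Fin 2) ℝ

/-- Evaluation of a two-variable real polynomial at a point of `ℝ × ℝ`. -/
def pev (p : Poly2) (x : ℝ × ℝ) : ℝ := MvPolynomial.eval ![x.1, x.2] p

/-- `uᵗ Φ v` where `Φ` is the matrix with polynomial entries `p11 p12 p21 p22`. -/
def bilPhi (p11 p12 p21 p22 : Poly2) (x u v : ℝ × ℝ) : ℝ :=
  u.1 * (pev p11 x * v.1 + pev p12 x * v.2) + u.2 * (pev p21 x * v.1 + pev p22 x * v.2)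

/-- The (classical) gradient of a two-variable polynomial. -/
def polyGrad (p : Poly2) (x : ℝ × ℝ) : ℝ × ℝ :=
  (pev (MvPolynomial.pderiv (0 : Fin 2) p) x, pev (MvPolynomial.pderiv (1 : Fin 2) p) x)

/-- `ρ` is a weight function on `Ω`. -/
def IsWeight (Ω : Set (ℝ × ℝ)) (ρ : ℝ × ℝ → ℝ) : Prop :=
  Measurable ρ ∧ (∀ᵐ x ∂(volume.restrict Ω), 0 < ρ x) ∧ IntegrableOn ρ Ω

/-- `ρ` is a moment weight function on `Ω`. -/
def IsMomentWeight (Ω : Set (ℝ × ℝ)) (ρ : ℝ × ℝ → ℝ) : Prop :=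
  Measurable ρ ∧ (∀ᵐ x ∂(volume.restrict Ω), 0 < ρ x) ∧
    ∀ m n : ℕ, IntegrableOn (fun x : ℝ × ℝ => |x.1| ^ m * |x.2| ^ n * ρ x) Ω

/-- `Φ` is symmetric and positive definite at every point of `Ω`. -/
def SymPosDef (Ω : Set (ℝ × ℝ)) (p11 p12 p21 p22 : Poly2) : Prop :=
  p12 = p21 ∧ ∀ x ∈ Ω, ∀ ζ : ℝ × ℝ, ζ ≠ 0 → 0 < bilPhi p11 p12 p21 p22 x ζ ζ

/-- `Φ` is symmetric, has entries of degree at most 2, and is positive definite on `Ω`. -/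
def GoodPhi (Ω : Set (ℝ × ℝ)) (p11 p12 p21 p22 : Poly2) : Prop :=
  SymPosDef Ω p11 p12 p21 p22 ∧ p11.totalDegree ≤ 2 ∧ p12.totalDegree ≤ 2 ∧
    p21.totalDegree ≤ 2 ∧ p22.totalDegree ≤ 2

/-- The Pearson equation `div(ρΦ) = ρ(ψ₁,ψ₂)` with explicit degree-one polynomials
`ψⱼ(x) = d_{j1} x₁ + d_{j2} x₂ + e_j` having linearly independent linear parts. -/
def PearsonWith (Ω : Set (ℝ × ℝ)) (ρ : ℝ × ℝ → ℝ) (p11 p12 p21 p22 : Poly2)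
    (d11 d12 d21 d22 e1 e2 : ℝ) : Prop :=
  ContDiffOn ℝ 1 ρ Ω ∧ d11 * d22 - d12 * d21 ≠ 0 ∧
    (∀ x ∈ Ω,
      fderiv ℝ (fun y => ρ y * pev p11 y) x (1, 0) +
        fderiv ℝ (fun y => ρ y * pev p21 y) x (0, 1) = ρ x * (d11 * x.1 + d12 * x.2 + e1)) ∧
    (∀ x ∈ Ω,
      fderiv ℝ (fun y => ρ y * pev p12 y) x (1, 0) +
        fderiv ℝ (fun y => ρ y * pev p22 y) x (0, 1) = ρ x * (d21 * x.1 + d22 * x.2 + e2))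

/-- The Pearson equation `div(ρΦ) = ρ(ψ₁,ψ₂)` for some admissible `ψ₁, ψ₂`. -/
def Pearson (Ω : Set (ℝ × ℝ)) (ρ : ℝ × ℝ → ℝ) (p11 p12 p21 p22 : Poly2) : Prop :=
  ∃ d11 d12 d21 d22 e1 e2 : ℝ, PearsonWith Ω ρ p11 p12 p21 p22 d11 d12 d21 d22 e1 e2

/-- `div(ρΦv)` for a pair of polynomials `v = (v1, v2)`. -/
def divRhoPhi (ρ : ℝ × ℝ → ℝ) (p11 p12 p21 p22 v1 v2 : Poly2) (x : ℝ × ℝ) : ℝ :=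
  fderiv ℝ (fun y => ρ y * (pev p11 y * pev v1 y + pev p12 y * pev v2 y)) x (1, 0) +
    fderiv ℝ (fun y => ρ y * (pev p21 y * pev v1 y + pev p22 y * pev v2 y)) x (0, 1)

/-- Membership in `L²(Ω, ρ)`. -/
def MemL2 (Ω : Set (ℝ × ℝ)) (ρ : ℝ × ℝ → ℝ) (u : ℝ × ℝ → ℝ) : Prop :=
  Measurable u ∧ IntegrableOn (fun x => u x ^ 2 * ρ x) Ω

/-- Membership in the matrix-weighted Lebesgue space `L²(Ω, ρΦ)`. -/
def MemL2M (Ω : Set (ℝ × ℝ)) (ρ : ℝ × ℝ → ℝ) (p11 p12 p21 p22 : Poly2)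
    (w : ℝ × ℝ → ℝ × ℝ) : Prop :=
  Measurable w ∧ IntegrableOn (fun x => ρ x * bilPhi p11 p12 p21 p22 x (w x) (w x)) Ω

/-- `h` is a weak gradient of `u`. -/
def IsWeakGrad (Ω : Set (ℝ × ℝ)) (ρ : ℝ × ℝ → ℝ) (p11 p12 p21 p22 : Poly2)
    (u : ℝ × ℝ → ℝ) (h : ℝ × ℝ → ℝ × ℝ) : Prop :=
  MemL2M Ω ρ p11 p12 p21 p22 h ∧
    ∀ v1 v2 : Poly2,
      ∫ x in Ω, u x * divRhoPhi ρ p11 p12 p21 p22 v1 v2 x =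
        - ∫ x in Ω, ρ x * bilPhi p11 p12 p21 p22 x (h x) (pev v1 x, pev v2 x)

/-- Membership in `W(Ω, ρ, ρΦ)`, the closure of the polynomials in `W^{1,2}(Ω, ρ, ρΦ)`,
for a function `u` with weak gradient `g`. -/
def MemW (Ω : Set (ℝ × ℝ)) (ρ : ℝ × ℝ → ℝ) (p11 p12 p21 p22 : Poly2)
    (u : ℝ × ℝ → ℝ) (g : ℝ × ℝ → ℝ × ℝ) : Prop :=
  MemL2 Ω ρ u ∧ IsWeakGrad Ω ρ p11 p12 p21 p22 u g ∧
    ∀ ε : ℝ, 0 < ε → ∃ q : Poly2,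
      (∫ x in Ω, (u x - pev q x) ^ 2 * ρ x) +
        (∫ x in Ω, ρ x * bilPhi p11 p12 p21 p22 x (g x - polyGrad q x) (g x - polyGrad q x))
          < ε ^ 2

/-!
Write the pointwise weight `ρΦ` as `TᵗT`, where `T = √ρ·C` and `Cᵗ` is the lower Cholesky factor of
`Φ`. Then `h ↦ T h` identifies `L²(Ω, ρΦ)` with the unweighted space `L²(Ω; ℝ²)`, the inverse being
`F ↦ T⁻¹F`, so completeness is inherited; likewise `u ↦ √ρ u` identifies `L²(Ω, ρ)` with `L²(Ω)`.
The Pearson equation turns `div(ρΦv)` into `ρ q` with a polynomial `q`, and all polynomials lie in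
`L²(Ω, ρ)` because `ρ` has finite moments. Both sides of the identity defining a weak gradient are
therefore pairings against fixed elements of the two spaces, and they pass to the limit.
-/

section UnweightedL2

open Topology

variable {α E : Type*} [MeasurableSpace α] {μ : Measure α}
  [NormedAddCommGroup E] [InnerProductSpace ℝ E]

lemma inner_toLp_toLp {f g : α → E} (hf : MemLp f 2 μ) (hg : MemLp g 2 μ) :
    inner ℝ (hf.toLp f) (hg.toLp g) = ∫ x, inner ℝ (f x) (g x) ∂μ := by
  rw [L2.inner_def]
  refine integral_congr_ae ?_
  filter_upwards [hf.coeFn_toLp, hg.coeFn_toLp] with x hfx hgx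
  rw [hfx, hgx]

lemma norm_toLp_sub_toLp_sq {f g : α → E} (hf : MemLp f 2 μ) (hg : MemLp g 2 μ) :
    ‖hf.toLp f - hg.toLp g‖ ^ 2 = ∫ x, ‖f x - g x‖ ^ 2 ∂μ := by
  rw [← MemLp.toLp_sub, ← real_inner_self_eq_norm_sq, inner_toLp_toLp]
  simp only [real_inner_self_eq_norm_sq, Pi.sub_apply]

lemma tendsto_toLp_iff_tendsto_integral_norm_sub_sq {ι : Type*} {l : Filter ι}
    {f : ι → α → E} {g : α → E} (hf : ∀ i, MemLp (f i) 2 μ) (hg : MemLp g 2 μ) :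
    Tendsto (fun i => (hf i).toLp (f i)) l (𝓝 (hg.toLp g)) ↔
      Tendsto (fun i => ∫ x, ‖f i x - g x‖ ^ 2 ∂μ) l (𝓝 0) := by
  simp only [← norm_toLp_sub_toLp_sq (hf _) hg]
  rw [tendsto_iff_norm_sub_tendsto_zero]
  refine ⟨fun h => by simpa using h.pow 2, fun h => ?_⟩
  simpa [Real.sqrt_sq (norm_nonneg _)] using h.sqrt

theorem exists_tendsto_integral_norm_sub_sq [CompleteSpace E] {f : ℕ → α → E}
    (hf : ∀ n, MemLp (f n) 2 μ)
    (hcauchy : ∀ ε : ℝ, 0 < ε → ∃ N : ℕ, ∀ m ≥ N, ∀ n ≥ N,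
      ∫ x, ‖f m x - f n x‖ ^ 2 ∂μ < ε ^ 2) :
    ∃ g : α → E, StronglyMeasurable g ∧ MemLp g 2 μ ∧
      Tendsto (fun n => ∫ x, ‖f n x - g x‖ ^ 2 ∂μ) atTop (𝓝 0) := by
  have hcauchySeq : CauchySeq fun n => (hf n).toLp (f n) := by
    refine Metric.cauchySeq_iff.2 fun ε hε => ?_
    obtain ⟨N, hN⟩ := hcauchy ε hε
    refine ⟨N, fun m hm n hn => lt_of_pow_lt_pow_left₀ 2 hε.le ?_⟩
    rw [dist_eq_norm, norm_toLp_sub_toLp_sq]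
    exact hN m hm n hn
  obtain ⟨g, hg⟩ := cauchySeq_tendsto_of_complete hcauchySeq
  refine ⟨g, Lp.stronglyMeasurable g, Lp.memLp g, ?_⟩
  rw [← tendsto_toLp_iff_tendsto_integral_norm_sub_sq hf (Lp.memLp g), Lp.toLp_coeFn]
  exact hg

theorem tendsto_integral_inner_of_tendsto_integral_norm_sub_sq {ι : Type*} {l : Filter ι}
    {f : ι → α → E} {g k : α → E} (hf : ∀ i, MemLp (f i) 2 μ) (hg : MemLp g 2 μ)
    (hk : MemLp k 2 μ) (hlim : Tendsto (fun i => ∫ x, ‖f i x - g x‖ ^ 2 ∂μ) l (𝓝 0)) :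
    Tendsto (fun i => ∫ x, inner ℝ (f i x) (k x) ∂μ) l (𝓝 (∫ x, inner ℝ (g x) (k x) ∂μ)) := by
  simp only [← inner_toLp_toLp (hf _) hk, ← inner_toLp_toLp hg hk]
  exact ((tendsto_toLp_iff_tendsto_integral_norm_sub_sq hf hg).2 hlim).inner tendsto_const_nhds

end UnweightedL2

/-- A measurable invertible square root of a field `B` of bilinear forms:
`B x v w = ⟪T x v, T x w⟫` for almost every `x`. It identifies the weighted space of sections `f`
with `∫ B x (f x) (f x) < ∞` with the unweighted space `L²(μ; E)`. The right inverse `S` lifts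
limits in `L²(μ; E)` back to sections. -/
structure IsMeasurableSqrt {α V E : Type*} [MeasurableSpace α] [AddCommGroup V] [Module ℝ V]
    [MeasurableSpace V] [NormedAddCommGroup E] [InnerProductSpace ℝ E] [MeasurableSpace E]
    (μ : Measure α) (B : α → V → V → ℝ) (T : α → V →ₗ[ℝ] E) (S : α → E → V) : Prop where
  inner_eq : ∀ᵐ x ∂μ, ∀ v w, inner ℝ (T x v) (T x w) = B x v w
  apply_inv : ∀ᵐ x ∂μ, ∀ e, T x (S x e) = e
  measurable_apply : Measurable fun p : α × V => T p.1 p.2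
  measurable_inv : Measurable fun p : α × E => S p.1 p.2

namespace IsMeasurableSqrt

open Topology

variable {α V E : Type*} [MeasurableSpace α] [AddCommGroup V] [Module ℝ V] [MeasurableSpace V]
  [NormedAddCommGroup E] [InnerProductSpace ℝ E] [MeasurableSpace E]
  {μ : Measure α} {B : α → V → V → ℝ} {T : α → V →ₗ[ℝ] E} {S : α → E → V}

lemma integral_eq (hT : IsMeasurableSqrt μ B T S) (f g : α → V) :
    ∫ x, B x (f x) (g x) ∂μ = ∫ x, inner ℝ (T x (f x)) (T x (g x)) ∂μ :=
  integral_congr_ae (hT.inner_eq.mono fun x hx => (hx (f x) (g x)).symm)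

lemma integral_sub_eq (hT : IsMeasurableSqrt μ B T S) (f g : α → V) :
    ∫ x, B x (f x - g x) (f x - g x) ∂μ = ∫ x, ‖T x (f x) - T x (g x)‖ ^ 2 ∂μ := by
  rw [hT.integral_eq (fun x => f x - g x)]
  simp only [map_sub, real_inner_self_eq_norm_sq]

lemma integrable_iff_memLp [BorelSpace E] [SecondCountableTopology E]
    (hT : IsMeasurableSqrt μ B T S) {f : α → V} (hf : Measurable f) :
    Integrable (fun x => B x (f x) (f x)) μ ↔ MemLp (fun x => T x (f x)) 2 μ := by
  have hTf : Measurable fun x => T x (f x) := hT.measurable_apply.comp (measurable_id.prodMk hf)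
  rw [memLp_two_iff_integrable_sq_norm hTf.aestronglyMeasurable]
  refine integrable_congr (hT.inner_eq.mono fun x hx => ?_)
  simp only [← hx, real_inner_self_eq_norm_sq]

theorem exists_tendsto_integral_sub [BorelSpace E] [SecondCountableTopology E] [CompleteSpace E]
    (hT : IsMeasurableSqrt μ B T S) {f : ℕ → α → V} (hf : ∀ n, Measurable (f n))
    (hfint : ∀ n, Integrable (fun x => B x (f n x) (f n x)) μ)
    (hcauchy : ∀ ε : ℝ, 0 < ε → ∃ N : ℕ, ∀ m ≥ N, ∀ n ≥ N,
      ∫ x, B x (f m x - f n x) (f m x - f n x) ∂μ < ε ^ 2) :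
    ∃ g : α → V, Measurable g ∧ Integrable (fun x => B x (g x) (g x)) μ ∧
      Tendsto (fun n => ∫ x, B x (f n x - g x) (f n x - g x) ∂μ) atTop (𝓝 0) := by
  have hfLp n : MemLp (fun x => T x (f n x)) 2 μ := (hT.integrable_iff_memLp (hf n)).1 (hfint n)
  simp only [hT.integral_sub_eq] at hcauchy ⊢
  obtain ⟨F, hFmeas, hFLp, hFlim⟩ := exists_tendsto_integral_norm_sub_sq hfLp hcauchy
  have hTS : (fun x => T x (S x (F x))) =ᵐ[μ] F := hT.apply_inv.mono fun x hx => hx (F x)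
  have hg : Measurable fun x => S x (F x) :=
    hT.measurable_inv.comp (measurable_id.prodMk hFmeas.measurable)
  refine ⟨fun x => S x (F x), hg, (hT.integrable_iff_memLp hg).2 ((memLp_congr_ae hTS).2 hFLp),
    hFlim.congr fun n => integral_congr_ae (hTS.mono fun x hx => ?_)⟩
  simp only [hx]

theorem tendsto_integral_of_tendsto_integral_sub [BorelSpace E] [SecondCountableTopology E]
    (hT : IsMeasurableSqrt μ B T S) {ι : Type*} {l : Filter ι} {f : ι → α → V} {g k : α → V}
    (hf : ∀ i, Measurable (f i)) (hg : Measurable g) (hk : Measurable k)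
    (hfint : ∀ i, Integrable (fun x => B x (f i x) (f i x)) μ)
    (hgint : Integrable (fun x => B x (g x) (g x)) μ)
    (hkint : Integrable (fun x => B x (k x) (k x)) μ)
    (hlim : Tendsto (fun i => ∫ x, B x (f i x - g x) (f i x - g x) ∂μ) l (𝓝 0)) :
    Tendsto (fun i => ∫ x, B x (f i x) (k x) ∂μ) l (𝓝 (∫ x, B x (g x) (k x) ∂μ)) := by
  simp only [hT.integral_sub_eq] at hlim
  simp only [hT.integral_eq]
  exact tendsto_integral_inner_of_tendsto_integral_norm_sub_sq
    (fun i => (hT.integrable_iff_memLp (hf i)).1 (hfint i)) ((hT.integrable_iff_memLp hg).1 hgint)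
    ((hT.integrable_iff_memLp hk).1 hkint) hlim

lemma of_inner (μ : Measure α) :
    IsMeasurableSqrt μ (fun (_ : α) (v w : E) => inner ℝ v w) (fun _ => LinearMap.id)
      fun _ e => e where
  inner_eq := .of_forall fun _ _ _ => rfl
  apply_inv := .of_forall fun _ _ => rfl
  measurable_apply := measurable_snd
  measurable_inv := measurable_snd

lemma weight_mul [BorelSpace E] [SecondCountableTopology E] (hT : IsMeasurableSqrt μ B T S)
    {ρ : α → ℝ} (hρ : Measurable ρ) (hρpos : ∀ᵐ x ∂μ, 0 < ρ x) :
    IsMeasurableSqrt μ (fun x v w => ρ x * B x v w) (fun x => √(ρ x) • T x)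
      fun x e => S x ((√(ρ x))⁻¹ • e) where
  inner_eq := by
    filter_upwards [hT.inner_eq, hρpos] with x hx hρx v w
    rw [LinearMap.smul_apply, LinearMap.smul_apply, real_inner_smul_left, real_inner_smul_right,
      hx, ← mul_assoc, Real.mul_self_sqrt hρx.le]
  apply_inv := by
    filter_upwards [hT.apply_inv, hρpos] with x hx hρx e
    rw [LinearMap.smul_apply, hx, smul_inv_smul₀ (Real.sqrt_pos.2 hρx).ne']
  measurable_apply := (hρ.comp measurable_fst).sqrt.smul hT.measurable_apply
  measurable_inv := hT.measurable_inv.comp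
    (measurable_fst.prodMk ((hρ.comp measurable_fst).sqrt.inv.smul measurable_snd))

end IsMeasurableSqrt

lemma isMeasurableSqrt_mul_mul {α : Type*} [MeasurableSpace α] {μ : Measure α} {ρ : α → ℝ}
    (hρ : Measurable ρ) (hρpos : ∀ᵐ x ∂μ, 0 < ρ x) :
    IsMeasurableSqrt μ (fun x (v w : ℝ) => v * w * ρ x) (fun x => √(ρ x) • LinearMap.id)
      fun x e => (√(ρ x))⁻¹ • e := by
  simpa only [Real.inner_apply, mul_comm] using
    (IsMeasurableSqrt.of_inner (E := ℝ) μ).weight_mul hρ hρpos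

section Cholesky

/-- The upper triangular Cholesky factor `C` of the matrix `A = !![a, b; b, c]`, acting on `ℝ × ℝ`,
so that `A = CᵗC` when `A` is positive definite. -/
def choleskyFactor (a b c : ℝ) : ℝ × ℝ →ₗ[ℝ] EuclideanSpace ℝ (Fin 2) where
  toFun v := !₂[√a * v.1 + b / √a * v.2, √(c - (b / √a) ^ 2) * v.2]
  map_add' v w := by ext i; fin_cases i <;> simp [mul_add, add_add_add_comm]
  map_smul' r v := by ext i; fin_cases i <;> simp [mul_add, mul_left_comm]

/-- Back substitution in the triangular system `choleskyFactor a b c v = e`. -/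
def choleskySolve (a b c : ℝ) (e : EuclideanSpace ℝ (Fin 2)) : ℝ × ℝ :=
  ((e 0 - b / √a * (e 1 / √(c - (b / √a) ^ 2))) / √a, e 1 / √(c - (b / √a) ^ 2))

variable {a b c : ℝ}

lemma cholesky_pivots_pos
    (hpos : ∀ v : ℝ × ℝ, v ≠ 0 → 0 < v.1 * (a * v.1 + b * v.2) + v.2 * (b * v.1 + c * v.2)) :
    0 < a ∧ 0 < c - (b / √a) ^ 2 := by
  have ha : 0 < a := by simpa using hpos (1, 0) (by simp)
  refine ⟨ha, ?_⟩
  -- The minimiser of the form over `v.2 = 1` is `v.1 = -b / a`, with the Schur complement as value.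
  have hmin := hpos (-b / a, 1) (by simp)
  rw [div_pow, Real.sq_sqrt ha.le]
  convert! hmin using 1
  field_simp
  ring

lemma inner_choleskyFactor (ha : 0 < a) (hc : 0 < c - (b / √a) ^ 2) (v w : ℝ × ℝ) :
    inner ℝ (choleskyFactor a b c v) (choleskyFactor a b c w) =
      v.1 * (a * w.1 + b * w.2) + v.2 * (b * w.1 + c * w.2) := by
  have hdiag : √a * √a = a := Real.mul_self_sqrt ha.le
  have hoff : √a * (b / √a) = b := mul_div_cancel₀ b (Real.sqrt_pos.2 ha).ne'
  have hschur := Real.mul_self_sqrt hc.le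
  simp only [choleskyFactor, LinearMap.coe_mk, AddHom.coe_mk, EuclideanSpace.inner_toLp_toLp,
    Matrix.vec2_dotProduct, star_trivial, Matrix.cons_val_zero, Matrix.cons_val_one]
  linear_combination v.1 * w.1 * hdiag + (v.1 * w.2 + v.2 * w.1) * hoff + v.2 * w.2 * hschur

lemma choleskyFactor_choleskySolve (ha : 0 < a) (hc : 0 < c - (b / √a) ^ 2)
    (e : EuclideanSpace ℝ (Fin 2)) : choleskyFactor a b c (choleskySolve a b c e) = e := by
  have hdiag : √a ≠ 0 := (Real.sqrt_pos.2 ha).ne'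
  have hschur : √(c - (b / √a) ^ 2) ≠ 0 := (Real.sqrt_pos.2 hc).ne'
  ext i
  fin_cases i <;> simp [choleskyFactor, choleskySolve, mul_div_cancel₀, hdiag, hschur]

theorem isMeasurableSqrt_cholesky {α : Type*} [MeasurableSpace α] {μ : Measure α}
    {a b c : α → ℝ} (ha : Measurable a) (hb : Measurable b) (hc : Measurable c)
    (hpos : ∀ᵐ x ∂μ, ∀ v : ℝ × ℝ, v ≠ 0 →
      0 < v.1 * (a x * v.1 + b x * v.2) + v.2 * (b x * v.1 + c x * v.2)) :
    IsMeasurableSqrt μ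
      (fun x v w => v.1 * (a x * w.1 + b x * w.2) + v.2 * (b x * w.1 + c x * w.2))
      (fun x => choleskyFactor (a x) (b x) (c x)) fun x => choleskySolve (a x) (b x) (c x) where
  inner_eq := hpos.mono fun _ hx =>
    inner_choleskyFactor (cholesky_pivots_pos hx).1 (cholesky_pivots_pos hx).2
  apply_inv := hpos.mono fun _ hx =>
    choleskyFactor_choleskySolve (cholesky_pivots_pos hx).1 (cholesky_pivots_pos hx).2
  measurable_apply := by
    refine (WithLp.measurable_toLp 2 (Fin 2 → ℝ)).comp (measurable_pi_lambda _ fun i => ?_)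
    fin_cases i
    · change Measurable fun p : α × ℝ × ℝ => √(a p.1) * p.2.1 + b p.1 / √(a p.1) * p.2.2
      fun_prop
    · change Measurable fun p : α × ℝ × ℝ => √(c p.1 - (b p.1 / √(a p.1)) ^ 2) * p.2.2
      fun_prop
  measurable_inv := by
    unfold choleskySolve
    fun_prop

end Cholesky

section Polynomials

theorem hasFDerivAt_mvPolynomial_eval {𝕜 σ : Type*} [NontriviallyNormedField 𝕜] [Fintype σ]
    (p : MvPolynomial σ 𝕜) (x : σ → 𝕜) :
    HasFDerivAt (fun y => MvPolynomial.eval y p)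
      (∑ i, MvPolynomial.eval x (MvPolynomial.pderiv i p) •
        ContinuousLinearMap.proj (R := 𝕜) (φ := fun _ : σ => 𝕜) i) x := by
  classical
  induction p using MvPolynomial.induction_on with
  | C a =>
    simp only [MvPolynomial.eval_C]
    refine (hasFDerivAt_const (𝕜 := 𝕜) a x).congr_fderiv ?_
    ext y
    simp
  | add p q hp hq =>
    simp only [map_add]
    refine (hp.fun_add hq).congr_fderiv ?_
    ext y
    simp [add_mul, Finset.sum_add_distrib]
  | mul_X p j hp =>
    simp only [map_mul, MvPolynomial.eval_X]
    refine (hp.mul (hasFDerivAt_apply j x)).congr_fderiv ?_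
    ext y
    simp [MvPolynomial.pderiv_X, Pi.single_apply, apply_ite, add_mul, Finset.sum_add_distrib,
      Finset.mul_sum, mul_assoc]

lemma hasFDerivAt_pev (p : Poly2) (x : ℝ × ℝ) :
    HasFDerivAt (pev p) ((polyGrad p x).1 • ContinuousLinearMap.fst ℝ ℝ ℝ +
      (polyGrad p x).2 • ContinuousLinearMap.snd ℝ ℝ ℝ) x := by
  have hcoord : HasFDerivAt (fun y : ℝ × ℝ => ![y.1, y.2])
      (ContinuousLinearMap.pi
        ![ContinuousLinearMap.fst ℝ ℝ ℝ, ContinuousLinearMap.snd ℝ ℝ ℝ]) x := by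
    refine hasFDerivAt_pi'.2 fun i => ?_
    fin_cases i
    exacts [hasFDerivAt_fst, hasFDerivAt_snd]
  refine ((hasFDerivAt_mvPolynomial_eval p ![x.1, x.2]).comp x hcoord).congr_fderiv ?_
  ext <;> simp [polyGrad, pev]

lemma fderiv_pev_apply (p : Poly2) (x e : ℝ × ℝ) :
    fderiv ℝ (pev p) x e = (polyGrad p x).1 * e.1 + (polyGrad p x).2 * e.2 := by
  simp [(hasFDerivAt_pev p x).fderiv]

lemma measurable_pev (p : Poly2) : Measurable (pev p) :=
  Continuous.measurable (continuous_iff_continuousAt.2 fun x => (hasFDerivAt_pev p x).continuousAt)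

lemma IsMomentWeight.integrableOn_mul_pev {Ω : Set (ℝ × ℝ)} {ρ : ℝ × ℝ → ℝ}
    (hρ : IsMomentWeight Ω ρ) (p : Poly2) : IntegrableOn (fun x => ρ x * pev p x) Ω := by
  obtain ⟨hρmeas, -, hmoments⟩ := hρ
  induction p using MvPolynomial.induction_on' with
  | monomial s a =>
    refine ((hmoments (s 0) (s 1)).const_mul |a|).mono
      (hρmeas.mul (measurable_pev _)).aestronglyMeasurable (.of_forall fun x => le_of_eq ?_)
    simp only [pev, MvPolynomial.eval_monomial, pow_zero, implies_true, Finsupp.prod_fintype,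
      Fin.prod_univ_two, Matrix.cons_val_zero, Matrix.cons_val_one, norm_mul, norm_pow,
      Real.norm_eq_abs, abs_abs]
    ring
  | add p q hp hq => simpa [pev, mul_add] using! hp.add hq

end Polynomials

section Pearson

variable {Ω : Set (ℝ × ℝ)} {ρ : ℝ × ℝ → ℝ} {p11 p12 p21 p22 ψ₁ ψ₂ : Poly2}

/-- The Pearson equation `div(ρΦ) = ρ(ψ₁,ψ₂)` with polynomials `ψ₁, ψ₂` of arbitrary degree, for a
differentiable weight `ρ`. -/
structure PolyPearson (Ω : Set (ℝ × ℝ)) (ρ : ℝ × ℝ → ℝ) (p11 p12 p21 p22 ψ₁ ψ₂ : Poly2) :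
    Prop where
  differentiableOn : DifferentiableOn ℝ ρ Ω
  div_col₁ : ∀ x ∈ Ω, fderiv ℝ (fun y => ρ y * pev p11 y) x (1, 0) +
    fderiv ℝ (fun y => ρ y * pev p21 y) x (0, 1) = ρ x * pev ψ₁ x
  div_col₂ : ∀ x ∈ Ω, fderiv ℝ (fun y => ρ y * pev p12 y) x (1, 0) +
    fderiv ℝ (fun y => ρ y * pev p22 y) x (0, 1) = ρ x * pev ψ₂ x

lemma Pearson.exists_polyPearson (hP : Pearson Ω ρ p11 p12 p21 p22) :
    ∃ ψ₁ ψ₂ : Poly2, PolyPearson Ω ρ p11 p12 p21 p22 ψ₁ ψ₂ := by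
  obtain ⟨d11, d12, d21, d22, e1, e2, hC1, -, hcol₁, hcol₂⟩ := hP
  let affine (d d' e : ℝ) : Poly2 := .C d * .X 0 + .C d' * .X 1 + .C e
  exact ⟨affine d11 d12 e1, affine d21 d22 e2, hC1.differentiableOn one_ne_zero,
    fun x hx => by simpa [pev, affine] using hcol₁ x hx,
    fun x hx => by simpa [pev, affine] using hcol₂ x hx⟩

/-- The polynomial `q = ψ₁v₁ + ψ₂v₂ + tr(ΦDv)`, `Dv` being the Jacobian matrix of `v`, for which
`div(ρΦv) = ρq` under the Pearson equation. -/
def pearsonDiv (p11 p12 p21 p22 ψ₁ ψ₂ v1 v2 : Poly2) : Poly2 :=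
  ψ₁ * v1 + ψ₂ * v2 +
    (p11 * MvPolynomial.pderiv 0 v1 + p12 * MvPolynomial.pderiv 0 v2 +
      p21 * MvPolynomial.pderiv 1 v1 + p22 * MvPolynomial.pderiv 1 v2)

lemma fderiv_mul_pev_combination_apply {x : ℝ × ℝ} (hρ : DifferentiableAt ℝ ρ x)
    (p q v1 v2 : Poly2) (e : ℝ × ℝ) :
    fderiv ℝ (fun y => ρ y * (pev p y * pev v1 y + pev q y * pev v2 y)) x e =
      fderiv ℝ (fun y => ρ y * pev p y) x e * pev v1 x +
        ρ x * pev p x * fderiv ℝ (pev v1) x e +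
      (fderiv ℝ (fun y => ρ y * pev q y) x e * pev v2 x +
        ρ x * pev q x * fderiv ℝ (pev v2) x e) := by
  have hpev (r : Poly2) : DifferentiableAt ℝ (pev r) x := (hasFDerivAt_pev r x).differentiableAt
  have hρpev (r : Poly2) : DifferentiableAt ℝ (fun y => ρ y * pev r y) x := hρ.fun_mul (hpev r)
  simp only [mul_add, ← mul_assoc]
  rw [fderiv_fun_add ((hρpev p).fun_mul (hpev v1)) ((hρpev q).fun_mul (hpev v2)),
    fderiv_fun_mul (hρpev p) (hpev v1), fderiv_fun_mul (hρpev q) (hpev v2)]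
  simp only [add_apply, smul_apply, smul_eq_mul]
  ring

theorem PolyPearson.divRhoPhi_eq (hΩ : IsOpen Ω) (hP : PolyPearson Ω ρ p11 p12 p21 p22 ψ₁ ψ₂)
    (v1 v2 : Poly2) {x : ℝ × ℝ} (hx : x ∈ Ω) :
    divRhoPhi ρ p11 p12 p21 p22 v1 v2 x =
      ρ x * pev (pearsonDiv p11 p12 p21 p22 ψ₁ ψ₂ v1 v2) x := by
  have hρ : DifferentiableAt ℝ ρ x := hP.differentiableOn.differentiableAt (hΩ.mem_nhds hx)
  have hcol₁ := hP.div_col₁ x hx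
  have hcol₂ := hP.div_col₂ x hx
  simp only [divRhoPhi, fderiv_mul_pev_combination_apply hρ, fderiv_pev_apply, polyGrad]
  simp only [pearsonDiv, pev, map_add, map_mul] at hcol₁ hcol₂ ⊢
  linear_combination
    MvPolynomial.eval ![x.1, x.2] v1 * hcol₁ + MvPolynomial.eval ![x.1, x.2] v2 * hcol₂

end Pearson

section WeightedSobolev

open Topology

variable {Ω : Set (ℝ × ℝ)} {ρ : ℝ × ℝ → ℝ} {p11 p12 p21 p22 ψ₁ ψ₂ : Poly2}

lemma SymPosDef.isMeasurableSqrt (hΩ : MeasurableSet Ω) (hρ : Measurable ρ)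
    (hρpos : ∀ᵐ x ∂volume.restrict Ω, 0 < ρ x) (hΦ : SymPosDef Ω p11 p12 p21 p22) :
    IsMeasurableSqrt (volume.restrict Ω) (fun x v w => ρ x * bilPhi p11 p12 p21 p22 x v w)
      (fun x => √(ρ x) • choleskyFactor (pev p11 x) (pev p12 x) (pev p22 x))
      fun x e => choleskySolve (pev p11 x) (pev p12 x) (pev p22 x) ((√(ρ x))⁻¹ • e) := by
  obtain ⟨rfl, hpos⟩ := hΦ
  exact (isMeasurableSqrt_cholesky (measurable_pev p11) (measurable_pev p12) (measurable_pev p22)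
    ((ae_restrict_mem hΩ).mono hpos)).weight_mul hρ hρpos

theorem exists_memL2_tendsto (hρ : Measurable ρ) (hρpos : ∀ᵐ x ∂volume.restrict Ω, 0 < ρ x)
    {u : ℕ → ℝ × ℝ → ℝ} (hu : ∀ n, MemL2 Ω ρ (u n))
    (hcauchy : ∀ ε : ℝ, 0 < ε → ∃ N : ℕ, ∀ m ≥ N, ∀ n ≥ N,
      ∫ x in Ω, (u m x - u n x) ^ 2 * ρ x < ε ^ 2) :
    ∃ u' : ℝ × ℝ → ℝ, MemL2 Ω ρ u' ∧
      Tendsto (fun n => ∫ x in Ω, (u n x - u' x) ^ 2 * ρ x) atTop (𝓝 0) := by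
  simp only [MemL2, sq, IntegrableOn] at hu hcauchy ⊢
  obtain ⟨u', hmeas, hint, hlim⟩ :=
    (isMeasurableSqrt_mul_mul hρ hρpos).exists_tendsto_integral_sub (fun n => (hu n).1)
      (fun n => (hu n).2) (by simpa only [sq] using hcauchy)
  exact ⟨u', ⟨hmeas, hint⟩, hlim⟩

lemma tendsto_integral_mul_of_memL2 (hρ : Measurable ρ)
    (hρpos : ∀ᵐ x ∂volume.restrict Ω, 0 < ρ x) {ι : Type*} {l : Filter ι}
    {u : ι → ℝ × ℝ → ℝ} {u' f : ℝ × ℝ → ℝ} (hu : ∀ i, MemL2 Ω ρ (u i)) (hu' : MemL2 Ω ρ u')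
    (hf : MemL2 Ω ρ f)
    (hlim : Tendsto (fun i => ∫ x in Ω, (u i x - u' x) ^ 2 * ρ x) l (𝓝 0)) :
    Tendsto (fun i => ∫ x in Ω, u i x * f x * ρ x) l (𝓝 (∫ x in Ω, u' x * f x * ρ x)) := by
  simp only [MemL2, sq, IntegrableOn] at hu hu' hf hlim
  exact (isMeasurableSqrt_mul_mul hρ hρpos).tendsto_integral_of_tendsto_integral_sub
    (fun i => (hu i).1) hu'.1 hf.1 (fun i => (hu i).2) hu'.2 hf.2 hlim

theorem SymPosDef.exists_memL2M_tendsto (hΦ : SymPosDef Ω p11 p12 p21 p22) (hΩ : MeasurableSet Ω)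
    (hρ : Measurable ρ) (hρpos : ∀ᵐ x ∂volume.restrict Ω, 0 < ρ x)
    {h : ℕ → ℝ × ℝ → ℝ × ℝ} (hh : ∀ n, MemL2M Ω ρ p11 p12 p21 p22 (h n))
    (hcauchy : ∀ ε : ℝ, 0 < ε → ∃ N : ℕ, ∀ m ≥ N, ∀ n ≥ N,
      ∫ x in Ω, ρ x * bilPhi p11 p12 p21 p22 x (h m x - h n x) (h m x - h n x) < ε ^ 2) :
    ∃ w : ℝ × ℝ → ℝ × ℝ, MemL2M Ω ρ p11 p12 p21 p22 w ∧
      Tendsto (fun n => ∫ x in Ω, ρ x * bilPhi p11 p12 p21 p22 x (h n x - w x) (h n x - w x))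
        atTop (𝓝 0) := by
  obtain ⟨w, hmeas, hint, hlim⟩ :=
    (hΦ.isMeasurableSqrt hΩ hρ hρpos).exists_tendsto_integral_sub (fun n => (hh n).1)
      (fun n => (hh n).2) hcauchy
  exact ⟨w, ⟨hmeas, hint⟩, hlim⟩

lemma SymPosDef.tendsto_integral_bilPhi_of_memL2M (hΦ : SymPosDef Ω p11 p12 p21 p22)
    (hΩ : MeasurableSet Ω) (hρ : Measurable ρ) (hρpos : ∀ᵐ x ∂volume.restrict Ω, 0 < ρ x)
    {ι : Type*} {l : Filter ι} {h : ι → ℝ × ℝ → ℝ × ℝ} {w v : ℝ × ℝ → ℝ × ℝ}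
    (hh : ∀ i, MemL2M Ω ρ p11 p12 p21 p22 (h i)) (hw : MemL2M Ω ρ p11 p12 p21 p22 w)
    (hv : MemL2M Ω ρ p11 p12 p21 p22 v)
    (hlim : Tendsto
      (fun i => ∫ x in Ω, ρ x * bilPhi p11 p12 p21 p22 x (h i x - w x) (h i x - w x)) l (𝓝 0)) :
    Tendsto (fun i => ∫ x in Ω, ρ x * bilPhi p11 p12 p21 p22 x (h i x) (v x)) l
      (𝓝 (∫ x in Ω, ρ x * bilPhi p11 p12 p21 p22 x (w x) (v x))) :=
  (hΦ.isMeasurableSqrt hΩ hρ hρpos).tendsto_integral_of_tendsto_integral_sub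
    (fun i => (hh i).1) hw.1 hv.1 (fun i => (hh i).2) hw.2 hv.2 hlim

lemma IsMomentWeight.memL2_pev (hρ : IsMomentWeight Ω ρ) (p : Poly2) : MemL2 Ω ρ (pev p) :=
  ⟨measurable_pev p, by simpa [pev, sq, mul_comm (ρ _)] using hρ.integrableOn_mul_pev (p * p)⟩

lemma IsMomentWeight.memL2M_pev (hρ : IsMomentWeight Ω ρ) (p11 p12 p21 p22 v1 v2 : Poly2) :
    MemL2M Ω ρ p11 p12 p21 p22 fun x => (pev v1 x, pev v2 x) :=
  ⟨(measurable_pev v1).prodMk (measurable_pev v2), by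
    simpa [pev, bilPhi] using
      hρ.integrableOn_mul_pev (v1 * (p11 * v1 + p12 * v2) + v2 * (p21 * v1 + p22 * v2))⟩

theorem PolyPearson.isWeakGrad_of_tendsto (hP : PolyPearson Ω ρ p11 p12 p21 p22 ψ₁ ψ₂)
    (hΩ : IsOpen Ω) (hρ : IsMomentWeight Ω ρ) (hΦ : SymPosDef Ω p11 p12 p21 p22)
    {ι : Type*} {l : Filter ι} [l.NeBot] {u : ι → ℝ × ℝ → ℝ} {h : ι → ℝ × ℝ → ℝ × ℝ}
    {u' : ℝ × ℝ → ℝ} {w : ℝ × ℝ → ℝ × ℝ} (hu : ∀ i, MemL2 Ω ρ (u i))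
    (hwg : ∀ i, IsWeakGrad Ω ρ p11 p12 p21 p22 (u i) (h i)) (hu' : MemL2 Ω ρ u')
    (hw : MemL2M Ω ρ p11 p12 p21 p22 w)
    (hulim : Tendsto (fun i => ∫ x in Ω, (u i x - u' x) ^ 2 * ρ x) l (𝓝 0))
    (hhlim : Tendsto
      (fun i => ∫ x in Ω, ρ x * bilPhi p11 p12 p21 p22 x (h i x - w x) (h i x - w x)) l (𝓝 0)) :
    IsWeakGrad Ω ρ p11 p12 p21 p22 u' w := by
  refine ⟨hw, fun v1 v2 => ?_⟩
  have hdiv (f : ℝ × ℝ → ℝ) : ∫ x in Ω, f x * divRhoPhi ρ p11 p12 p21 p22 v1 v2 x =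
      ∫ x in Ω, f x * pev (pearsonDiv p11 p12 p21 p22 ψ₁ ψ₂ v1 v2) x * ρ x :=
    setIntegral_congr_fun hΩ.measurableSet fun x hx => by
      simp only [hP.divRhoPhi_eq hΩ v1 v2 hx]
      ring
  have hleft := tendsto_integral_mul_of_memL2 hρ.1 hρ.2.1 hu hu'
    (hρ.memL2_pev (pearsonDiv p11 p12 p21 p22 ψ₁ ψ₂ v1 v2)) hulim
  have hright := hΦ.tendsto_integral_bilPhi_of_memL2M hΩ.measurableSet hρ.1 hρ.2.1
    (fun i => (hwg i).1) hw (hρ.memL2M_pev p11 p12 p21 p22 v1 v2) hhlim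
  rw [hdiv]
  exact tendsto_nhds_unique hleft
    (hright.neg.congr fun i => by rw [← (hwg i).2 v1 v2, hdiv])

lemma exists_forall_ge_lt_sq_of_tendsto_zero {a : ℕ → ℝ} (ha : Tendsto a atTop (𝓝 0)) (ε : ℝ)
    (hε : 0 < ε) : ∃ N : ℕ, ∀ n ≥ N, a n < ε ^ 2 :=
  eventually_atTop.1 (ha.eventually_lt_const (by positivity))

theorem W12_complete_general (hΩ : IsOpen Ω) (hρ : IsMomentWeight Ω ρ)
    (hΦ : SymPosDef Ω p11 p12 p21 p22) (hP : PolyPearson Ω ρ p11 p12 p21 p22 ψ₁ ψ₂)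
    (u : ℕ → ℝ × ℝ → ℝ) (h : ℕ → ℝ × ℝ → ℝ × ℝ) (hu : ∀ n, MemL2 Ω ρ (u n))
    (hwg : ∀ n, IsWeakGrad Ω ρ p11 p12 p21 p22 (u n) (h n))
    (hcauchyu : ∀ ε : ℝ, 0 < ε → ∃ N : ℕ, ∀ m ≥ N, ∀ n ≥ N,
      ∫ x in Ω, (u m x - u n x) ^ 2 * ρ x < ε ^ 2)
    (hcauchyh : ∀ ε : ℝ, 0 < ε → ∃ N : ℕ, ∀ m ≥ N, ∀ n ≥ N,
      ∫ x in Ω, ρ x * bilPhi p11 p12 p21 p22 x (h m x - h n x) (h m x - h n x) < ε ^ 2) :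
    ∃ (u' : ℝ × ℝ → ℝ) (w : ℝ × ℝ → ℝ × ℝ), MemL2 Ω ρ u' ∧ MemL2M Ω ρ p11 p12 p21 p22 w ∧
      (∀ ε : ℝ, 0 < ε → ∃ N : ℕ, ∀ n ≥ N, ∫ x in Ω, (u n x - u' x) ^ 2 * ρ x < ε ^ 2) ∧
      (∀ ε : ℝ, 0 < ε → ∃ N : ℕ, ∀ n ≥ N,
        ∫ x in Ω, ρ x * bilPhi p11 p12 p21 p22 x (h n x - w x) (h n x - w x) < ε ^ 2) ∧
      IsWeakGrad Ω ρ p11 p12 p21 p22 u' w := by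
  obtain ⟨u', hu', hulim⟩ := exists_memL2_tendsto hρ.1 hρ.2.1 hu hcauchyu
  obtain ⟨w, hw, hhlim⟩ := hΦ.exists_memL2M_tendsto hΩ.measurableSet hρ.1 hρ.2.1
    (fun n => (hwg n).1) hcauchyh
  exact ⟨u', w, hu', hw, exists_forall_ge_lt_sq_of_tendsto_zero hulim,
    exists_forall_ge_lt_sq_of_tendsto_zero hhlim,
    hP.isWeakGrad_of_tendsto hΩ hρ hΦ hu hwg hu' hw hulim hhlim⟩

end WeightedSobolev

/-- Completeness of the matrix-weighted Sobolev space
`W^{1,2}(Ω, ρ, ρΦ)`. -/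
theorem W12_complete (Ω : Set (ℝ × ℝ)) (hΩopen : IsOpen Ω) (hΩne : Ω.Nonempty)
    (ρ : ℝ × ℝ → ℝ) (hρ : IsMomentWeight Ω ρ)
    (p11 p12 p21 p22 : Poly2) (hΦ : GoodPhi Ω p11 p12 p21 p22)
    (hP : Pearson Ω ρ p11 p12 p21 p22)
    (u : ℕ → ℝ × ℝ → ℝ) (h : ℕ → ℝ × ℝ → ℝ × ℝ)
    (huL2 : ∀ n, MemL2 Ω ρ (u n))
    (hwg : ∀ n, IsWeakGrad Ω ρ p11 p12 p21 p22 (u n) (h n))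
    (hcauchyu : ∀ ε : ℝ, 0 < ε → ∃ N : ℕ, ∀ m ≥ N, ∀ n ≥ N,
      (∫ x in Ω, (u m x - u n x) ^ 2 * ρ x) < ε ^ 2)
    (hcauchyh : ∀ ε : ℝ, 0 < ε → ∃ N : ℕ, ∀ m ≥ N, ∀ n ≥ N,
      (∫ x in Ω, ρ x * bilPhi p11 p12 p21 p22 x (h m x - h n x) (h m x - h n x)) < ε ^ 2) :
    ∃ (uu : ℝ × ℝ → ℝ) (w : ℝ × ℝ → ℝ × ℝ), MemL2 Ω ρ uu ∧
      MemL2M Ω ρ p11 p12 p21 p22 w ∧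
      (∀ ε : ℝ, 0 < ε → ∃ N : ℕ, ∀ n ≥ N,
        (∫ x in Ω, (u n x - uu x) ^ 2 * ρ x) < ε ^ 2) ∧
      (∀ ε : ℝ, 0 < ε → ∃ N : ℕ, ∀ n ≥ N,
        (∫ x in Ω, ρ x * bilPhi p11 p12 p21 p22 x (h n x - w x) (h n x - w x)) < ε ^ 2) ∧
      IsWeakGrad Ω ρ p11 p12 p21 p22 uu w := by
  obtain ⟨_, _, hψ⟩ := hP.exists_polyPearson
  exact W12_complete_general hΩopen hρ hΦ.1 hψ u h huL2 hwg hcauchyu hcauchyh
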